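/- Let α be a set (of type symbols), u ∈ α a distinguished element (the universe type), and R a binary relation on α (the declared direct-subtype relation) such that the converse of R is well-founded (there is no infinite chain a0 R a1 R a2 R …). Define the completed direct-subtype relation R' by: R' a b holds iff R a b holds, or (a ≠ u, b = u, and a has no R-successor). Then for every a ≠ u the transitive closure of R' relates a to u, i.e., there is a nonempty R'-path from a to u. -/

import Mathlib

/-- abstract form of Proposition 1.
`α` is the set of type symbols, `u` the universe type, `R` the declared
direct-subtype relation, whose converse is assumed well-founded (i.e. there is
no infinite chain `a0 R a1 R a2 R …`).  The completed direct-subtype relation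
`R'` adds `a R' u` for every `a ≠ u` without any declared `R`-successor.
Then every `a ≠ u` is related to `u` by the transitive closure of `R'`
(a nonempty `R'`-path from `a` to `u`). -/
theorem every_type_subtype_of_universe {α : Type*} (u : α) (R : α → α → Prop)
    (hwf : WellFounded (flip R)) :
    ∀ a : α, a ≠ u →
      Relation.TransGen (fun a b => R a b ∨ (a ≠ u ∧ b = u ∧ ∀ c, ¬ R a c)) a u := by
  intro a
  -- Well-founded induction up the hierarchy: the hypothesis covers all declared supertypes of `a`.
  induction a using hwf.induction with
  | _ a ih =>
    intro ha
    by_cases h : ∃ c, R a c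
    · obtain ⟨c, hc⟩ := h
      by_cases hcu : c = u
      · subst hcu
        exact .single (.inl hc)
      · exact .head (.inl hc) (ih c hc hcu)
    · exact .single (.inr ⟨ha, rfl, not_exists.mp h⟩)
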